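/- Let Z^{2¹²}(τ,z) = 2·(η(τ)⁸/η(2τ)⁴)·φ_{−2,1}(τ,z) be the twined elliptic genus for the M₂₄ class 2b. Then for all τ ∈ ℍ and z ∈ ℂ, exp(−4πi z²/(2τ+1)) · Z^{2¹²}( τ/(2τ+1), z/(2τ+1) ) = −Z^{2¹²}(τ,z); that is, the slash of Z^{2¹²} by the matrix M_{1/2} = (1,0;2,1) representing the width-one cusp 1/2 of Γ₀(4) equals −Z^{2¹²}. -/

import Mathlib

open Complex


/-- The Dedekind eta function. -/
noncomputable def Eta (τ : ℂ) : ℂ :=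
  Complex.exp (Real.pi * I * τ / 12) *
    ∏' n : ℕ, (1 - Complex.exp (2 * Real.pi * I * ((n : ℂ) + 1) * τ))

noncomputable def θ₁ (τ z : ℂ) : ℂ :=
  -I * ∑' n : ℤ, (-1 : ℂ) ^ n *
    Complex.exp (Real.pi * I * ((n : ℂ) + 1 / 2) ^ 2 * τ + (2 * (n : ℂ) + 1) * Real.pi * I * z)

noncomputable def θ₂ (τ z : ℂ) : ℂ :=
  ∑' n : ℤ,
    Complex.exp (Real.pi * I * ((n : ℂ) + 1 / 2) ^ 2 * τ + (2 * (n : ℂ) + 1) * Real.pi * I * z)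

noncomputable def θ₃ (τ z : ℂ) : ℂ :=
  ∑' n : ℤ, Complex.exp (Real.pi * I * (n : ℂ) ^ 2 * τ + 2 * (n : ℂ) * Real.pi * I * z)

noncomputable def θ₄ (τ z : ℂ) : ℂ :=
  ∑' n : ℤ, (-1 : ℂ) ^ n *
    Complex.exp (Real.pi * I * (n : ℂ) ^ 2 * τ + 2 * (n : ℂ) * Real.pi * I * z)

/-- The weak Jacobi form φ_{0,1}. -/
noncomputable def φ01 (τ z : ℂ) : ℂ :=
  4 * ((θ₂ τ z / θ₂ τ 0) ^ 2 + (θ₃ τ z / θ₃ τ 0) ^ 2 + (θ₄ τ z / θ₄ τ 0) ^ 2)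

/-- The weak Jacobi form φ_{−2,1}. -/
noncomputable def φm21 (τ z : ℂ) : ℂ := θ₁ τ z ^ 2 / Eta τ ^ 6

/-- Twined elliptic genus for the class 2b (cycle shape 2^12). -/
noncomputable def Z2b (τ z : ℂ) : ℂ :=
  2 * (Eta τ ^ 8 / Eta (2 * τ) ^ 4) * φm21 τ z

/-! `M_{1/2} = S T⁻² S⁻¹` is conjugate to a translation, so it is enough to know how `η` and
`φ_{−2,1}` behave under `T` and `S`. Since `φ_{−2,1}` is a Jacobi form of weight `−2` and index `1`
without character, its slash is trivial up to the factor `(2τ + 1)⁻²`. The sign comes from the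
weight-two eta quotient `η(τ)⁸ / η(2τ)⁴`: as `2 · τ / (2τ + 1) = w / (w + 1)` for `w = 2τ`, the
numerator contributes the multiplier `e^{−4πi/3}` and the denominator `e^{−πi/3}`, with quotient
`e^{−πi} = −1`. -/

lemma im_neg_one_div_pos {τ : ℂ} (hτ : 0 < τ.im) : 0 < (-1 / τ).im := by
  simpa [neg_div, inv_neg] using UpperHalfPlane.im_inv_neg_coe_pos ⟨τ, hτ⟩

lemma ne_zero_of_im_pos {τ : ℂ} (hτ : 0 < τ.im) : τ ≠ 0 :=
  UpperHalfPlane.ne_zero ⟨τ, hτ⟩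

lemma mul_add_one_eq_neg_mul_neg_one_div_sub {τ : ℂ} (hτ : τ ≠ 0) (c : ℂ) :
    c * τ + 1 = -(τ * (-1 / τ - c)) := by
  field_simp
  ring

lemma div_mul_add_one_eq_neg_one_div {τ : ℂ} (hτ : τ ≠ 0) (c : ℂ) :
    τ / (c * τ + 1) = -1 / (-1 / τ - c) := by
  rw [mul_add_one_eq_neg_mul_neg_one_div_sub hτ, ← mul_neg, div_mul_cancel_left₀ hτ, inv_neg,
    neg_div (-1 / τ - c), one_div]

lemma Eta_eq_eta (τ : ℂ) : Eta τ = ModularForm.eta τ := by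
  simp only [Eta, ModularForm.eta, ModularForm.eta_q_eq_cexp, Function.Periodic.qParam]
  congr 2
  push_cast
  ring

lemma Eta_ne_zero {τ : ℂ} (hτ : 0 < τ.im) : Eta τ ≠ 0 := by
  rw [Eta_eq_eta]
  exact ModularForm.eta_ne_zero hτ

lemma Eta_add_int (τ : ℂ) (n : ℤ) :
    Eta (τ + n) = exp (Real.pi * I * n / 12) * Eta τ := by
  have hfactor (k : ℕ) : exp (2 * Real.pi * I * ((k : ℂ) + 1) * (τ + n)) =
      exp (2 * Real.pi * I * ((k : ℂ) + 1) * τ) :=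
    exp_eq_exp_iff_exists_int.mpr ⟨(k + 1) * n, by push_cast; ring⟩
  simp only [Eta, hfactor]
  rw [← mul_assoc, ← exp_add]
  congr 2
  ring

lemma Eta_neg_one_div_sq {τ : ℂ} (hτ : 0 < τ.im) :
    Eta (-1 / τ) ^ 2 = -I * τ * Eta τ ^ 2 := by
  have hη : ModularForm.eta (-1 / τ) = (sqrt I)⁻¹ * (sqrt τ * ModularForm.eta τ) :=
    ModularForm.eta_comp_eq_csqrt_I_inv hτ
  have sqrt_sq (x : ℂ) : sqrt x ^ 2 = x := cpow_ofNat_inv_pow x 2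
  rw [Eta_eq_eta, Eta_eq_eta, hη, mul_pow, mul_pow, inv_pow, sqrt_sq, sqrt_sq, inv_I, mul_assoc]

lemma Eta_div_int_mul_add_one_sq {τ : ℂ} (hτ : 0 < τ.im) (n : ℤ) :
    Eta (τ / (n * τ + 1)) ^ 2 = (n * τ + 1) * exp (-(Real.pi * I * n / 6)) * Eta τ ^ 2 := by
  have hτ0 : τ ≠ 0 := ne_zero_of_im_pos hτ
  have hw : 0 < (-1 / τ - n).im := by simpa using im_neg_one_div_pos hτ
  have htranslate : Eta (-1 / τ - n) ^ 2 = exp (-(Real.pi * I * n / 6)) * Eta (-1 / τ) ^ 2 := by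
    rw [sub_eq_add_neg, ← Int.cast_neg, Eta_add_int, mul_pow, ← exp_nat_mul]
    congr 2
    push_cast
    ring
  rw [div_mul_add_one_eq_neg_one_div hτ0, Eta_neg_one_div_sq hw, htranslate,
    Eta_neg_one_div_sq hτ, mul_add_one_eq_neg_mul_neg_one_div_sub hτ0]
  linear_combination (τ * (-1 / τ - n) * exp (-(Real.pi * I * n / 6)) * Eta τ ^ 2) * I_sq

lemma Eta_quotient_div_two_mul_add_one {τ : ℂ} (hτ : 0 < τ.im) :
    Eta (τ / (2 * τ + 1)) ^ 8 / Eta (2 * (τ / (2 * τ + 1))) ^ 4 =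
      -(2 * τ + 1) ^ 2 * (Eta τ ^ 8 / Eta (2 * τ) ^ 4) := by
  have h2τ : 0 < (2 * τ).im := by simpa using hτ
  have hnum : Eta (τ / (2 * τ + 1)) ^ 8 =
      (2 * τ + 1) ^ 4 * exp (-(4 * Real.pi * I / 3)) * Eta τ ^ 8 := by
    have hsq := Eta_div_int_mul_add_one_sq hτ 2
    rw [Int.cast_ofNat] at hsq
    rw [pow_mul _ 2 4, hsq, mul_pow, mul_pow, ← exp_nat_mul, ← pow_mul]
    congr 3
    push_cast
    ring
  have hden : Eta (2 * (τ / (2 * τ + 1))) ^ 4 =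
      (2 * τ + 1) ^ 2 * exp (-(Real.pi * I / 3)) * Eta (2 * τ) ^ 4 := by
    have hsq := Eta_div_int_mul_add_one_sq h2τ 1
    rw [Int.cast_one, one_mul, mul_one] at hsq
    rw [← mul_div_assoc, pow_mul _ 2 2, hsq, mul_pow, mul_pow, ← exp_nat_mul, ← pow_mul]
    congr 3
    push_cast
    ring
  have hsign : exp (-(4 * Real.pi * I / 3)) = -exp (-(Real.pi * I / 3)) := by
    rw [← exp_sub_pi_mul_I]
    congr 1
    ring
  rw [hnum, hden, hsign]
  field_simp

lemma θ₁_eq_jacobiTheta₂ (τ z : ℂ) :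
    θ₁ τ z = -I * exp (Real.pi * I * τ / 4 + Real.pi * I * z) *
      jacobiTheta₂ (z + τ / 2 + 1 / 2) τ := by
  rw [θ₁, jacobiTheta₂, mul_assoc, ← tsum_mul_left (a := exp _)]
  refine congrArg (-I * ·) (tsum_congr fun n ↦ ?_)
  rw [jacobiTheta₂_term, ← exp_add, ← exp_pi_mul_I, ← exp_int_mul, ← exp_add]
  congr 1
  ring

lemma θ₁_neg (τ z : ℂ) : θ₁ τ (-z) = -θ₁ τ z := by
  rw [θ₁, θ₁, ← mul_neg, ← tsum_neg, ← (Equiv.subLeft (-1 : ℤ)).tsum_eq]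
  refine congrArg (-I * ·) (tsum_congr fun n ↦ ?_)
  have hsign : (-1 : ℂ) ^ (-1 - n) = -(-1) ^ n := by
    rw [← neg_add', add_comm, zpow_neg, ← inv_zpow, inv_neg_one, zpow_add_one₀ (by norm_num),
      mul_neg_one]
  rw [Equiv.subLeft_apply, hsign, neg_mul]
  congr 3
  push_cast
  ring

lemma θ₁_add_int (τ z : ℂ) (n : ℤ) :
    θ₁ (τ + n) z = exp (Real.pi * I * n / 4) * θ₁ τ z := by
  rw [θ₁, θ₁, mul_left_comm (exp _), ← tsum_mul_left (a := exp _)]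
  refine congrArg (-I * ·) (tsum_congr fun k ↦ ?_)
  obtain ⟨m, hm⟩ : Even (k * (k + 1)) := Int.even_mul_succ_self k
  have hm' : (k : ℂ) * (k + 1) = m + m := mod_cast hm
  rw [mul_left_comm, ← exp_add]
  congr 1
  refine exp_eq_exp_iff_exists_int.mpr ⟨m * n, ?_⟩
  push_cast
  linear_combination (Real.pi * I * n) * hm'

lemma jacobiTheta₂_div_neg_one_div {τ : ℂ} (hτ : τ ≠ 0) (z : ℂ) :
    jacobiTheta₂ (z / τ) (-1 / τ) =
      (-I * τ) ^ (1 / 2 : ℂ) * exp (Real.pi * I * z ^ 2 / τ) * jacobiTheta₂ z τ := by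
  have hroot : (-I * τ) ^ (1 / 2 : ℂ) ≠ 0 := by
    simp [cpow_eq_zero_iff, hτ]
  have hexp : exp (-Real.pi * I * z ^ 2 / τ) = (exp (Real.pi * I * z ^ 2 / τ))⁻¹ := by
    rw [← exp_neg, neg_mul, neg_mul, neg_div]
  rw [jacobiTheta₂_functional_equation z τ, hexp, one_div ((-I * τ) ^ (1 / 2 : ℂ)), ← mul_inv,
    ← mul_assoc, mul_inv_cancel₀ (mul_ne_zero hroot (exp_ne_zero _)), one_mul]

lemma θ₁_neg_one_div {τ : ℂ} (hτ : τ ≠ 0) (z : ℂ) :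
    θ₁ (-1 / τ) (z / τ) =
      -I * (-I * τ) ^ (1 / 2 : ℂ) * exp (Real.pi * I * z ^ 2 / τ) * θ₁ τ z := by
  have hshift : z / τ + -1 / τ / 2 + 1 / 2 = (z + τ / 2 + 1 / 2) / τ + -1 / τ := by
    field_simp
    ring
  have hexp : exp (Real.pi * I * (-1 / τ) / 4 + Real.pi * I * (z / τ)) *
      exp (-Real.pi * I * (-1 / τ + 2 * ((z + τ / 2 + 1 / 2) / τ))) *
      exp (Real.pi * I * (z + τ / 2 + 1 / 2) ^ 2 / τ) =
      -I * (exp (Real.pi * I * z ^ 2 / τ) * exp (Real.pi * I * τ / 4 + Real.pi * I * z)) := by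
    rw [← exp_neg_pi_div_two_mul_I]
    simp only [← exp_add]
    congr 1
    field_simp
    ring
  rw [θ₁_eq_jacobiTheta₂, θ₁_eq_jacobiTheta₂, hshift, jacobiTheta₂_add_left',
    jacobiTheta₂_div_neg_one_div hτ]
  linear_combination
    (-I * (-I * τ) ^ (1 / 2 : ℂ) * jacobiTheta₂ (z + τ / 2 + 1 / 2) τ) * hexp

lemma φm21_neg (τ z : ℂ) : φm21 τ (-z) = φm21 τ z := by
  rw [φm21, φm21, θ₁_neg, neg_sq]

lemma φm21_add_int (τ z : ℂ) (n : ℤ) : φm21 (τ + n) z = φm21 τ z := by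
  have hexp : exp (Real.pi * I * n / 4) ^ 2 = exp (Real.pi * I * n / 12) ^ 6 := by
    rw [← exp_nat_mul, ← exp_nat_mul]
    congr 1
    push_cast
    ring
  rw [φm21, φm21, θ₁_add_int, Eta_add_int, mul_pow, mul_pow, hexp,
    mul_div_mul_left _ _ (pow_ne_zero 6 (exp_ne_zero _))]

lemma φm21_neg_one_div {τ : ℂ} (hτ : 0 < τ.im) (z : ℂ) :
    φm21 (-1 / τ) (z / τ) = exp (2 * Real.pi * I * z ^ 2 / τ) / τ ^ 2 * φm21 τ z := by
  have hτ0 : τ ≠ 0 := ne_zero_of_im_pos hτ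
  have hη : Eta τ ≠ 0 := Eta_ne_zero hτ
  have hθ : θ₁ (-1 / τ) (z / τ) ^ 2 =
      I * τ * exp (2 * Real.pi * I * z ^ 2 / τ) * θ₁ τ z ^ 2 := by
    have hroot : ((-I * τ) ^ (1 / 2 : ℂ)) ^ 2 = -I * τ := by
      rw [one_div, cpow_ofNat_inv_pow]
    have hexp : exp (Real.pi * I * z ^ 2 / τ) ^ 2 = exp (2 * Real.pi * I * z ^ 2 / τ) := by
      rw [← exp_nat_mul]
      congr 1
      push_cast
      ring
    rw [θ₁_neg_one_div hτ0, mul_pow, mul_pow, mul_pow, hroot, hexp, neg_sq, I_sq]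
    ring
  rw [φm21, φm21, hθ, pow_mul _ 2 3, Eta_neg_one_div_sq hτ]
  field_simp
  rw [I_sq, neg_one_mul]

lemma φm21_div_int_mul_add_one {τ : ℂ} (hτ : 0 < τ.im) (z : ℂ) (n : ℤ) :
    φm21 (τ / (n * τ + 1)) (z / (n * τ + 1)) =
      exp (2 * Real.pi * I * n * z ^ 2 / (n * τ + 1)) / (n * τ + 1) ^ 2 * φm21 τ z := by
  have hτ0 : τ ≠ 0 := ne_zero_of_im_pos hτ
  obtain ⟨w, hw_def⟩ : ∃ w : ℂ, w = -1 / τ - n := ⟨_, rfl⟩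
  have hw : 0 < w.im := by simpa [hw_def] using im_neg_one_div_pos hτ
  have hw0 : w ≠ 0 := ne_zero_of_im_pos hw
  have hc : n * τ + 1 = -(τ * w) := hw_def ▸ mul_add_one_eq_neg_mul_neg_one_div_sub hτ0 n
  have hz : z / (n * τ + 1) = -(z / τ) / w := by
    rw [hc, div_neg, neg_div, div_div]
  have hexp : exp (2 * Real.pi * I * (-(z / τ)) ^ 2 / w) * exp (2 * Real.pi * I * z ^ 2 / τ) =
      exp (2 * Real.pi * I * n * z ^ 2 / (n * τ + 1)) := by
    rw [← exp_add, hc]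
    congr 1
    field_simp
    linear_combination z ^ 2 * hc
  calc φm21 (τ / (n * τ + 1)) (z / (n * τ + 1))
      = φm21 (-1 / w) (-(z / τ) / w) := by
        rw [hz, div_mul_add_one_eq_neg_one_div hτ0, hw_def]
    _ = exp (2 * Real.pi * I * (-(z / τ)) ^ 2 / w) / w ^ 2 * φm21 (-1 / τ) (z / τ) := by
        rw [φm21_neg_one_div hw, φm21_neg, ← φm21_add_int w _ n, hw_def, sub_add_cancel]
    _ = exp (2 * Real.pi * I * n * z ^ 2 / (n * τ + 1)) / (n * τ + 1) ^ 2 * φm21 τ z := by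
        rw [φm21_neg_one_div hτ, ← hexp, hc]
        field_simp

/-- The slash of Z^{2¹²} by M_{1/2} = (1,0;2,1) equals −Z^{2¹²}. -/
theorem Z2b_slash_M_half (τ : ℂ) (hτ : 0 < τ.im) (z : ℂ) :
    Complex.exp (-4 * Real.pi * I * z ^ 2 / (2 * τ + 1)) *
        Z2b (τ / (2 * τ + 1)) (z / (2 * τ + 1)) =
      -Z2b τ z := by
  have hc : 2 * τ + 1 ≠ 0 := ne_zero_of_im_pos (by simpa using hτ)
  have hφ := φm21_div_int_mul_add_one hτ z 2
  rw [Int.cast_ofNat] at hφ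
  have hexp : exp (-4 * Real.pi * I * z ^ 2 / (2 * τ + 1)) =
      (exp (2 * Real.pi * I * 2 * z ^ 2 / (2 * τ + 1)))⁻¹ := by
    rw [← exp_neg]
    congr 1
    ring
  rw [Z2b, Z2b, Eta_quotient_div_two_mul_add_one hτ, hφ, hexp]
  field_simp
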